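/- Let a > −1, μ ∈ {0,1}, m ≥ 1, n = 2m + μ, let k ≥ 0 be an integer and s > 0. For an integer j, define A_j = ∫_{ℝ^n} 1[ #{i : |x_i| < s} = j ] · ∏_{i=1}^{n} (1 + x_i²)^{−(n+a+1)/2} · ∏_{1≤i<l≤n} |x_l − x_i| dx and Z₁ = ∫_{ℝ^n} ∏_{i=1}^{n} (1 + x_i²)^{−(n+a+1)/2} · ∏_{1≤i<l≤n} |x_l − x_i| dx, with the convention A_j = 0 for j < 0. Further define B_k = ∫_{(0,∞)^m} 1[ #{i : y_i < s²} = k ] · ∏_{i=1}^{m} y_i^{μ−1/2} (1 + y_i)^{−(n+a)} · ∏_{1≤i<l≤m} (y_l − y_i)² dy and Z₂ = ∫_{(0,∞)^m} ∏_{i=1}^{m} y_i^{μ−1/2} (1 + y_i)^{−(n+a)} · ∏_{1≤i<l≤m} (y_l − y_i)² dy. Then all these integrals are finite, Z₁ > 0, Z₂ > 0, and (A_{2k+μ−1} + A_{2k+μ}) / Z₁ = B_k / Z₂. -/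

import Mathlib

open MeasureTheory

/-- The integrand of the Cauchy OE gap-counting integral `A_j` on `ℝ^n`. -/
noncomputable def coeGapIntegrand (n : ℕ) (a : ℝ) (s : ℝ) (j : ℤ) (x : Fin n → ℝ) : ℝ :=
  if ((Finset.univ.filter fun i => |x i| < s).card : ℤ) = j then
    (∏ i, (1 + (x i) ^ 2) ^ (-(((n : ℝ) + a + 1) / 2))) *
      ∏ k, ∏ l ∈ Finset.Iio k, |x k - x l|
  else 0

/-- The integrand of the Cauchy OE normalization `Z₁`. -/
noncomputable def coeTotalIntegrand (n : ℕ) (a : ℝ) (x : Fin n → ℝ) : ℝ :=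
  (∏ i, (1 + (x i) ^ 2) ^ (-(((n : ℝ) + a + 1) / 2))) *
    ∏ k, ∏ l ∈ Finset.Iio k, |x k - x l|

/-- The integrand of the transformed Cauchy UE gap-counting integral `B_k` on `(0,∞)^m`. -/
noncomputable def cueGapIntegrand (m μ n : ℕ) (a : ℝ) (c : ℝ) (k : ℕ) (y : Fin m → ℝ) : ℝ :=
  if (Finset.univ.filter fun i => y i < c).card = k then
    (∏ i, (y i) ^ ((μ : ℝ) - 1 / 2) * (1 + y i) ^ (-((n : ℝ) + a))) *
      ∏ i, ∏ l ∈ Finset.Iio i, (y i - y l) ^ 2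
  else 0

/-- The integrand of the transformed Cauchy UE normalization `Z₂`. -/
noncomputable def cueTotalIntegrand (m μ n : ℕ) (a : ℝ) (y : Fin m → ℝ) : ℝ :=
  (∏ i, (y i) ^ ((μ : ℝ) - 1 / 2) * (1 + y i) ^ (-((n : ℝ) + a))) *
    ∏ i, ∏ l ∈ Finset.Iio i, (y i - y l) ^ 2

open MeasureTheory

theorem prod_Iio_eq_vandermonde {n : ℕ} (v : Fin n → ℝ) :
    ∏ k, ∏ l ∈ Finset.Iio k, (v k - v l) = (Matrix.vandermonde v).det := by
  rw [Matrix.det_vandermonde]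
  apply Finset.prod_comm'
  intro x y
  simp

theorem abs_term {n : ℕ} (t : Fin n → ℝ) (hpos : ∀ i, 0 < t i) (hmono : StrictMono t)
    (ε : Fin n → ℤˣ) :
    ∏ k, ∏ l ∈ Finset.Iio k, |((ε k : ℤ) : ℝ) * t k - ((ε l : ℤ) : ℝ) * t l|
      = (Matrix.of fun i j : Fin n =>
          (((ε i : ℤ) : ℝ)) ^ (i : ℕ) * (((ε i : ℤ) : ℝ) * t i) ^ (j : ℕ)).det := by
  have h1 : ∀ k, ∀ l ∈ Finset.Iio k, |((ε k : ℤ) : ℝ) * t k - ((ε l : ℤ) : ℝ) * t l|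
      = ((ε k : ℤ) : ℝ) * (((ε k : ℤ) : ℝ) * t k - ((ε l : ℤ) : ℝ) * t l) := by
    intro k l hl
    have hl' : t l < t k := hmono (Finset.mem_Iio.1 hl)
    have hp := hpos l
    have hq := hpos k
    rcases Int.units_eq_one_or (ε k) with h | h <;> rcases Int.units_eq_one_or (ε l) with h' | h' <;>
      simp only [h, h', Units.val_one, Units.val_neg, Int.cast_one, Int.cast_neg]
    · rw [abs_of_pos] <;> linarith
    · rw [abs_of_pos] <;> linarith
    · rw [abs_of_neg] <;> linarith
    · rw [abs_of_neg] <;> linarith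
  have h2 : (Matrix.of fun i j : Fin n =>
          (((ε i : ℤ) : ℝ)) ^ (i : ℕ) * (((ε i : ℤ) : ℝ) * t i) ^ (j : ℕ)).det
      = (∏ i, (((ε i : ℤ) : ℝ)) ^ (i : ℕ)) *
        (Matrix.vandermonde fun i => ((ε i : ℤ) : ℝ) * t i).det := by
    rw [← Matrix.det_mul_column]
    rfl
  rw [h2, ← prod_Iio_eq_vandermonde, ← Finset.prod_mul_distrib]
  refine Finset.prod_congr rfl fun k _ => ?_
  rw [Finset.prod_congr rfl (h1 k), Finset.prod_mul_distrib]
  simp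

theorem coe_sign_sum {n : ℕ} (t : Fin n → ℝ) (hpos : ∀ i, 0 < t i) (hmono : StrictMono t) :
    ∑ ε : Fin n → ℤˣ,
      ∏ k, ∏ l ∈ Finset.Iio k, |((ε k : ℤ) : ℝ) * t k - ((ε l : ℤ) : ℝ) * t l|
      = 2 ^ n * (Matrix.of fun i j : Fin n =>
          if ((i : ℕ) + j) % 2 = 0 then t i ^ (j : ℕ) else 0).det := by
  rw [Finset.sum_congr rfl fun ε _ => abs_term t hpos hmono ε]
  have := (Matrix.detRowAlternating (R := ℝ) (n := Fin n)).toMultilinearMap.map_sum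
    (α := fun _ => ℤˣ)
    (fun i u => fun j : Fin n => (((u : ℤ) : ℝ)) ^ (i : ℕ) * (((u : ℤ) : ℝ) * t i) ^ (j : ℕ))
  have h3 : (Matrix.of fun i j : Fin n => ∑ u : ℤˣ,
      (((u : ℤ) : ℝ)) ^ (i : ℕ) * (((u : ℤ) : ℝ) * t i) ^ (j : ℕ)) =
      (2 : ℝ) • (Matrix.of fun i j : Fin n =>
          if ((i : ℕ) + j) % 2 = 0 then t i ^ (j : ℕ) else 0) := by
    ext i j
    simp only [Matrix.of_apply, Matrix.smul_apply, smul_eq_mul]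
    have hu : (Finset.univ : Finset ℤˣ) = {1, -1} := rfl
    rw [hu, Finset.sum_pair (by decide)]
    simp only [Units.val_one, Units.val_neg, Int.cast_one, Int.cast_neg, one_pow, one_mul]
    rw [mul_pow, ← mul_assoc, ← pow_add]
    split_ifs with h
    · rw [Even.neg_one_pow (Nat.even_iff.2 h)]; ring
    · rw [Odd.neg_one_pow (Nat.not_even_iff_odd.1 (fun h' => h (Nat.even_iff.1 h')))]; ring
  have h4 := congrArg Matrix.det h3
  rw [Matrix.det_smul, Fintype.card_fin] at h4
  rw [← h4]
  refine this.symm.trans ?_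
  have : (fun i : Fin n => ∑ u : ℤˣ, fun j : Fin n =>
    (((u : ℤ) : ℝ)) ^ (i : ℕ) * (((u : ℤ) : ℝ) * t i) ^ (j : ℕ)) = (Matrix.of fun i j : Fin n => ∑ u : ℤˣ,
      (((u : ℤ) : ℝ)) ^ (i : ℕ) * (((u : ℤ) : ℝ) * t i) ^ (j : ℕ)) := by
    funext i j
    simp
  show Matrix.det (fun i : Fin n => ∑ u : ℤˣ, fun j : Fin n => (((u : ℤ) : ℝ)) ^ (i : ℕ) * (((u : ℤ) : ℝ) * t i) ^ (j : ℕ)) = _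
  rw [this]

/-- position of the two interlacing families -/
def posMap (m μ : ℕ) (_hμ : μ ≤ 1) : Fin (m + μ) ⊕ Fin m → Fin (2 * m + μ)
  | Sum.inl i => ⟨2 * i + 1 - μ, by omega⟩
  | Sum.inr i => ⟨2 * i + μ, by omega⟩

theorem posMap_bij (m μ : ℕ) (hμ : μ ≤ 1) : Function.Bijective (posMap m μ hμ) := by
  rw [Fintype.bijective_iff_injective_and_card]
  constructor
  · rintro (i | i) (j | j) h <;> simp only [posMap, Fin.mk.injEq] at h
    · congr 1; ext; omega
    · omega
    · omega
    · congr 1; ext; omega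
  · simp; ring

noncomputable def posEquiv (m μ : ℕ) (hμ : μ ≤ 1) : Fin (m + μ) ⊕ Fin m ≃ Fin (2 * m + μ) :=
  Equiv.ofBijective _ (posMap_bij m μ hμ)

theorem posEquiv_inl (m μ : ℕ) (hμ : μ ≤ 1) (i : Fin (m + μ)) :
    ((posEquiv m μ hμ (Sum.inl i) : Fin _) : ℕ) = 2 * i + 1 - μ := id rfl
theorem posEquiv_inr (m μ : ℕ) (hμ : μ ≤ 1) (i : Fin m) :
    ((posEquiv m μ hμ (Sum.inr i) : Fin _) : ℕ) = 2 * i + μ := id rfl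

theorem checker_det (m μ : ℕ) (hμ : μ ≤ 1) (t : Fin (2 * m + μ) → ℝ) :
    (Matrix.of fun i j : Fin (2 * m + μ) =>
          if ((i : ℕ) + j) % 2 = 0 then t i ^ (j : ℕ) else 0).det =
    (Matrix.of fun i j : Fin (m + μ) =>
        t (posEquiv m μ hμ (Sum.inl i)) ^ (2 * (j : ℕ) + 1 - μ)).det *
    ((∏ i : Fin m, t (posEquiv m μ hμ (Sum.inr i)) ^ μ) *
      ∏ k : Fin m, ∏ l ∈ Finset.Iio k, (t (posEquiv m μ hμ (Sum.inr k)) ^ 2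
        - t (posEquiv m μ hμ (Sum.inr l)) ^ 2)) := by
  rw [prod_Iio_eq_vandermonde (fun k => t (posEquiv m μ hμ (Sum.inr k)) ^ 2),
    ← Matrix.det_mul_column, ← Matrix.det_submatrix_equiv_self (posEquiv m μ hμ),
    ← Matrix.det_fromBlocks_zero₂₁ _ 0]
  congr 1
  ext (i | i) (j | j)
  · simp only [Matrix.submatrix_apply, Matrix.of_apply, Matrix.fromBlocks_apply₁₁, posEquiv_inl]
    rw [if_pos]; omega
  · simp only [Matrix.submatrix_apply, Matrix.of_apply, Matrix.fromBlocks_apply₁₂, posEquiv_inl,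
      posEquiv_inr, Matrix.zero_apply]
    rw [if_neg]; omega
  · simp only [Matrix.submatrix_apply, Matrix.of_apply, Matrix.fromBlocks_apply₂₁, posEquiv_inl,
      posEquiv_inr, Matrix.zero_apply]
    rw [if_neg]; omega
  · simp only [Matrix.submatrix_apply, Matrix.of_apply, Matrix.fromBlocks_apply₂₂,
      posEquiv_inr, Matrix.vandermonde_apply]
    rw [if_pos (by omega), pow_add, pow_mul, mul_comm]

theorem lt_iff_card {n : ℕ} (t : Fin n → ℝ) (hmono : StrictMono t) (s : ℝ) (i : Fin n) :
    t i < s ↔ (i : ℕ) < (Finset.univ.filter fun i => t i < s).card := by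
  constructor
  · intro h
    have : Finset.Iic i ⊆ Finset.univ.filter fun i => t i < s := by
      intro j hj
      simp only [Finset.mem_filter, Finset.mem_univ, true_and]
      exact (hmono.monotone (Finset.mem_Iic.1 hj)).trans_lt h
    have := Finset.card_le_card this
    rw [Fin.card_Iic] at this
    omega
  · intro h
    by_contra h'
    have : (Finset.univ.filter fun i => t i < s) ⊆ Finset.Iio i := by
      intro j hj
      simp only [Finset.mem_filter, Finset.mem_univ, true_and] at hj
      rw [Finset.mem_Iio]
      by_contra hc
      exact h' ((hmono.monotone (not_lt.1 hc)).trans_lt hj)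
    have := Finset.card_le_card this
    rw [Fin.card_Iio] at this
    omega

theorem count_lemma (m μ : ℕ) (hμ : μ ≤ 1) (t : Fin (2 * m + μ) → ℝ) (hmono : StrictMono t)
    (s : ℝ) :
    ((Finset.univ.filter fun i => t i < s).card + 1 - μ) / 2 =
      (Finset.univ.filter fun i : Fin m => t (posEquiv m μ hμ (Sum.inr i)) < s).card := by
  simp_rw [fun i : Fin m => lt_iff_card t hmono s (posEquiv m μ hμ (Sum.inr i)), posEquiv_inr]
  have hc : (Finset.univ.filter fun i => t i < s).card ≤ 2 * m + μ := by
    simpa using Finset.card_le_univ (Finset.univ.filter fun i => t i < s)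
  generalize (Finset.univ.filter fun i => t i < s).card = c at *
  have : (Finset.univ.filter fun i : Fin m => 2 * (i : ℕ) + μ < c)
    = (Finset.univ.filter fun i : Fin m => (i : ℕ) < (c + 1 - μ) / 2) := by
    ext i; simp only [Finset.mem_filter, Finset.mem_univ, true_and]; omega
  rw [this, Fin.card_filter_val_lt]
  omega
open MeasureTheory

/-- half-line Lebesgue measure -/
noncomputable def rhoM : Measure ℝ := volume.restrict (Set.Ioi (0 : ℝ))

instance : SigmaFinite rhoM := by unfold rhoM; infer_instance

noncomputable def piM (N : ℕ) : Measure (Fin N → ℝ) := Measure.pi fun _ => rhoM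

instance (N : ℕ) : SigmaFinite (piM N) := by unfold piM; infer_instance

theorem piM_eq (N : ℕ) : piM N = volume.restrict {y : Fin N → ℝ | ∀ i, 0 < y i} := by
  unfold piM rhoM
  rw [← Measure.restrict_pi_pi, volume_pi]
  congr 1
  ext; simp

theorem vol_abs_preimage (s : Set ℝ) (hs : MeasurableSet s) :
    volume ((fun x : ℝ => |x|) ⁻¹' s) = 2 * rhoM s := by
  have hS : MeasurableSet (s ∩ Set.Ioi 0) := hs.inter measurableSet_Ioi
  have h1 : ((fun x : ℝ => |x|) ⁻¹' s : Set ℝ) =ᵐ[volume]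
      ((s ∩ Set.Ioi 0) ∪ (-(s ∩ Set.Ioi 0)) : Set ℝ) := by
    have h0 : ∀ᵐ x : ℝ, x ≠ 0 := by
      rw [ae_iff]; simp
    filter_upwards [h0] with x hx
    apply propext
    change |x| ∈ s ↔ ((x ∈ s ∧ 0 < x) ∨ (-x ∈ s ∧ 0 < -x))
    rcases lt_or_gt_of_ne hx with h | h
    · rw [abs_of_neg h]
      constructor
      · intro h'; right; exact ⟨h', by linarith⟩
      · rintro (⟨_, h'⟩ | ⟨h', _⟩)
        · linarith
        · exact h'
    · rw [abs_of_pos h]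
      constructor
      · intro h'; left; exact ⟨h', h⟩
      · rintro (⟨h', _⟩ | ⟨_, h'⟩)
        · exact h'
        · linarith
  rw [measure_congr h1, measure_union _ hS.neg, Measure.measure_neg, rhoM,
    Measure.restrict_apply hs, two_mul]
  rw [Set.disjoint_left]
  rintro x ⟨_, h⟩ ⟨_, h'⟩
  have h1 : 0 < x := h
  have h2 : 0 < -x := h'
  linarith

theorem map_abs_eq (N : ℕ) :
    Measure.map (fun (x : Fin N → ℝ) i => |x i|) volume = (2 ^ N : ENNReal) • piM N := by
  have hm : Measurable (fun (x : Fin N → ℝ) i => |x i|) := by fun_prop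
  have h2 : (2 ^ N : ENNReal) ≠ 0 := by positivity
  have h3 : (2 ^ N : ENNReal) ≠ ⊤ := by finiteness
  have : piM N = (2 ^ N : ENNReal)⁻¹ • Measure.map (fun (x : Fin N → ℝ) i => |x i|) volume := by
    unfold piM
    refine Measure.pi_eq (fun s hs => ?_)
    rw [Measure.smul_apply, Measure.map_apply hm (MeasurableSet.univ_pi hs)]
    have : (fun (x : Fin N → ℝ) i => |x i|) ⁻¹' (Set.univ.pi s) =
      Set.univ.pi fun i => (fun x : ℝ => |x|) ⁻¹' (s i) := by
      ext; simp
    rw [this, volume_pi, Measure.pi_pi]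
    simp_rw [vol_abs_preimage _ (hs _)]
    rw [Finset.prod_mul_distrib, smul_eq_mul, ← mul_assoc]
    simp only [Finset.prod_const, Finset.card_univ, Fintype.card_fin]
    rw [ENNReal.inv_mul_cancel h2 h3, one_mul]
  rw [this, smul_smul, ENNReal.mul_inv_cancel h2 h3, one_smul]

theorem integral_abs_eq (N : ℕ) (G : (Fin N → ℝ) → ℝ) (hG : Measurable G) :
    ∫ x : Fin N → ℝ, G (fun i => |x i|) = 2 ^ N * ∫ t, G t ∂(piM N) := by
  have hm : Measurable (fun (x : Fin N → ℝ) i => |x i|) := by fun_prop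
  rw [← integral_map (φ := fun (x : Fin N → ℝ) i => |x i|) hm.aemeasurable
    hG.aestronglyMeasurable, map_abs_eq, integral_smul_measure]
  simp

theorem integrable_abs_iff (N : ℕ) (G : (Fin N → ℝ) → ℝ) (hG : Measurable G) :
    Integrable (fun x : Fin N → ℝ => G (fun i => |x i|)) ↔ Integrable G (piM N) := by
  have hm : Measurable (fun (x : Fin N → ℝ) i => |x i|) := by fun_prop
  have h2 : (2 ^ N : ENNReal) ≠ 0 := by positivity
  have h3 : (2 ^ N : ENNReal) ≠ ⊤ := by finiteness
  rw [← integrable_smul_measure (μ := piM N) h2 h3, ← map_abs_eq,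
    integrable_map_measure hG.aestronglyMeasurable hm.aemeasurable]
  rfl

theorem integral_sign_eq {N : ℕ} (F : (Fin N → ℝ) → ℝ) (ε : Fin N → ℤˣ) :
    ∫ x : Fin N → ℝ, F (fun i => ((ε i : ℤ) : ℝ) * x i) = ∫ x, F x := by
  have hme : MeasurePreserving (fun (x : Fin N → ℝ) i => ((ε i : ℤ) : ℝ) * x i) volume volume := by
    refine measurePreserving_pi (fun _ => volume) (fun _ => volume) (f := fun i x => ((ε i : ℤ) : ℝ) * x) fun i => ?_
    rcases Int.units_eq_one_or (ε i) with h | h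
    · simp only [h, Units.val_one, Int.cast_one, one_mul]
      exact MeasurePreserving.id _
    · simp only [h, Units.val_neg, Units.val_one, Int.cast_one, Int.cast_neg, neg_mul, one_mul]
      exact Measure.measurePreserving_neg _
  have hemb : MeasurableEmbedding (fun (x : Fin N → ℝ) i => ((ε i : ℤ) : ℝ) * x i) := by
    refine MeasurableEmbedding.of_measurable_inverse (g := (fun (x : Fin N → ℝ) i => ((ε i : ℤ) : ℝ) * x i)) ?_ ?_ ?_ ?_
    · fun_prop
    · convert MeasurableSet.univ
      rw [Set.range_eq_univ]
      intro x
      refine ⟨fun i => ((ε i : ℤ) : ℝ) * x i, ?_⟩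
      funext i
      rcases Int.units_eq_one_or (ε i) with h | h <;> simp [h]
    · fun_prop
    · intro x
      funext i
      rcases Int.units_eq_one_or (ε i) with h | h <;> simp [h]
  exact hme.integral_comp hemb F

theorem integrable_sign {N : ℕ} (F : (Fin N → ℝ) → ℝ) (hF : Integrable F) (ε : Fin N → ℤˣ) :
    Integrable fun x : Fin N → ℝ => F (fun i => ((ε i : ℤ) : ℝ) * x i) := by
  have hme : MeasurePreserving (fun (x : Fin N → ℝ) i => ((ε i : ℤ) : ℝ) * x i) volume volume := by
    refine measurePreserving_pi (fun _ => volume) (fun _ => volume) (f := fun i x => ((ε i : ℤ) : ℝ) * x) fun i => ?_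
    rcases Int.units_eq_one_or (ε i) with h | h
    · simp only [h, Units.val_one, Int.cast_one, one_mul]
      exact MeasurePreserving.id _
    · simp only [h, Units.val_neg, Units.val_one, Int.cast_one, Int.cast_neg, neg_mul, one_mul]
      exact Measure.measurePreserving_neg _
  exact hme.integrable_comp_of_integrable hF

/-- folding an integral on `ℝ^N` to the positive orthant -/
theorem integral_fold {N : ℕ} (F : (Fin N → ℝ) → ℝ) (hm : Measurable F) (hF : Integrable F) :
    Integrable (fun t => ∑ ε : Fin N → ℤˣ, F (fun i => ((ε i : ℤ) : ℝ) * t i)) (piM N) ∧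
    ∫ x, F x = ∫ t, ∑ ε : Fin N → ℤˣ, F (fun i => ((ε i : ℤ) : ℝ) * t i) ∂(piM N) := by
  set G : (Fin N → ℝ) → ℝ := fun t => ∑ ε : Fin N → ℤˣ, F (fun i => ((ε i : ℤ) : ℝ) * t i) with hG
  have hGm : Measurable G := by
    refine Finset.measurable_sum _ fun ε _ => hm.comp ?_
    fun_prop
  have hinv : ∀ x : Fin N → ℝ, G (fun i => |x i|) = G x := by
    intro x
    let η : Fin N → ℤˣ := fun i => if 0 ≤ x i then 1 else -1
    have hη : ∀ i, |x i| = ((η i : ℤ) : ℝ) * x i := by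
      intro i
      by_cases h : 0 ≤ x i
      · simp [η, h, abs_of_nonneg h]
      · simp [η, h, abs_of_neg (not_le.1 h)]
    simp only [hG]
    refine Fintype.sum_equiv (Equiv.mulRight η) _ _ fun ε => ?_
    congr 1
    funext i
    simp [hη, mul_assoc]
  have hGi : Integrable G := by
    refine integrable_finsetSum _ fun ε _ => integrable_sign F hF ε
  have hsum : ∫ x, G x = 2 ^ N * ∫ x, F x := by
    rw [hG, integral_finsetSum _ fun ε _ => integrable_sign F hF ε]
    simp_rw [integral_sign_eq]
    simp
  constructor
  · rw [← integrable_abs_iff N G hGm]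
    simpa only [hinv] using hGi
  · have h := integral_abs_eq N G hGm
    simp only [hinv] at h
    rw [hsum] at h
    exact mul_left_cancel₀ (by positivity) h

theorem ae_injective (N : ℕ) : ∀ᵐ t ∂(piM N), Function.Injective t := by
  rw [piM_eq]
  apply ae_restrict_of_ae
  have : ∀ i j : Fin N, i ≠ j → ∀ᵐ t : Fin N → ℝ, t i ≠ t j := by
    intro i j hij
    let p : Submodule ℝ (Fin N → ℝ) :=
      LinearMap.ker (LinearMap.proj (R := ℝ) (φ := fun _ : Fin N => ℝ) i - LinearMap.proj j)
    have hp : p ≠ ⊤ := by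
      intro h
      have : (Pi.single i 1 : Fin N → ℝ) ∈ p := by rw [h]; trivial
      simp [p, LinearMap.mem_ker, hij.symm] at this
    have := Measure.addHaar_submodule volume p hp
    rw [ae_iff]
    convert this using 2
    ext t
    simp [p, LinearMap.mem_ker, sub_eq_zero]
  have h2 : ∀ᵐ t : Fin N → ℝ, ∀ i j : Fin N, i ≠ j → t i ≠ t j := by
    rw [ae_all_iff]; intro i
    rw [ae_all_iff]; intro j
    by_cases hij : i = j
    · simp [hij]
    · filter_upwards [this i j hij] with t ht _
      exact ht
  filter_upwards [h2] with t ht i j h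
  by_contra hne
  exact ht i j hne h

theorem measurableSet_strictMono (N : ℕ) : MeasurableSet {t : Fin N → ℝ | StrictMono t} := by
  have : {t : Fin N → ℝ | StrictMono t} = ⋂ i, ⋂ j, {t | i < j → t i < t j} := by
    ext t; simp [StrictMono]
  rw [this]
  refine MeasurableSet.iInter fun i => MeasurableSet.iInter fun j => ?_
  by_cases h : i < j
  · simp only [h, forall_const]
    exact measurableSet_lt (measurable_pi_apply i) (measurable_pi_apply j)
  · simp [h]

theorem measurePreserving_perm {N : ℕ} (σ : Equiv.Perm (Fin N)) :
    MeasurePreserving (fun t : Fin N → ℝ => t ∘ σ) (piM N) (piM N) := by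
  have := measurePreserving_piCongrLeft (fun _ : Fin N => rhoM) σ.symm
  convert! this using 1
  funext t
  funext i
  have := MeasurableEquiv.piCongrLeft_apply_apply (β := fun _ : Fin N => ℝ) σ.symm t (σ i)
  simp only [Equiv.symm_apply_apply] at this
  rw [this]; rfl

theorem measurableEmbedding_perm {N : ℕ} (σ : Equiv.Perm (Fin N)) :
    MeasurableEmbedding (fun t : Fin N → ℝ => t ∘ σ) := by
  refine MeasurableEmbedding.of_measurable_inverse (g := (fun (x : Fin N → ℝ) => x ∘ σ.symm)) ?_ ?_ ?_ ?_
  · exact measurable_pi_lambda _ fun i => measurable_pi_apply _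
  · convert MeasurableSet.univ
    rw [Set.range_eq_univ]
    intro x
    refine ⟨x ∘ σ.symm, ?_⟩
    funext i; simp
  · exact measurable_pi_lambda _ fun i => measurable_pi_apply _
  · intro x; funext i; simp

theorem integral_symm {N : ℕ} (G : (Fin N → ℝ) → ℝ) (hG : Integrable G (piM N))
    (hsym : ∀ (σ : Equiv.Perm (Fin N)) t, G (t ∘ σ) = G t) :
    ∫ t, G t ∂(piM N) = (N.factorial : ℝ) * ∫ t in {t | StrictMono t}, G t ∂(piM N) := by
  let R : Equiv.Perm (Fin N) → Set (Fin N → ℝ) := fun σ => {t | StrictMono (t ∘ σ)}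
  have hRm : ∀ σ, MeasurableSet (R σ) := fun σ =>
    (measurePreserving_perm σ).measurable (measurableSet_strictMono N)
  have hdisj : Pairwise (Function.onFun Disjoint R) := by
    intro σ τ hne
    rw [Function.onFun, Set.disjoint_left]
    intro t h1 h2
    apply hne
    have h1' : StrictMono (t ∘ σ) := h1
    have h2' : StrictMono (t ∘ τ) := h2
    have hinj : Function.Injective t := by
      have := h1'.injective.comp σ.symm.injective
      simpa [Function.comp_assoc] using this
    have e1 := Tuple.unique_monotone (f := t) (σ := σ) (τ := τ) h1'.monotone h2'.monotone
    ext i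
    exact congrArg _ (hinj (congrFun e1 i))
  have hcov : ∀ᵐ t ∂(piM N), t ∈ ⋃ σ, R σ := by
    filter_upwards [ae_injective N] with t ht
    rw [Set.mem_iUnion]
    exact ⟨Tuple.sort t, (Tuple.monotone_sort t).strictMono_of_injective
      (ht.comp (Tuple.sort t).injective)⟩
  have h1 : ∫ t, G t ∂(piM N) = ∫ t in ⋃ σ, R σ, G t ∂(piM N) := by
    rw [Measure.restrict_eq_self_of_ae_mem hcov]
  rw [h1, integral_iUnion_fintype hRm hdisj fun σ => hG.integrableOn]
  have h2 : ∀ σ, ∫ t in R σ, G t ∂(piM N) = ∫ t in {t | StrictMono t}, G t ∂(piM N) := by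
    intro σ
    rw [← (measurePreserving_perm σ).setIntegral_preimage_emb (measurableEmbedding_perm σ) G
      {t | StrictMono t}]
    refine setIntegral_congr_fun (hRm σ) fun t _ => (hsym σ t).symm
  simp_rw [h2]
  simp [Fintype.card_perm]

theorem prod_pair_eq {n : ℕ} (b : Fin n → ℝ) :
    ∏ k, ∏ l ∈ Finset.Iio k, (b k * b l) = ∏ k, b k ^ (n - 1) := by
  have h1 : ∏ k, ∏ l ∈ Finset.Iio k, b l = ∏ k : Fin n, b k ^ (n - 1 - (k : ℕ)) := by
    have : ∏ k, ∏ l ∈ Finset.Iio k, b l = ∏ l, ∏ k ∈ Finset.Ioi l, b l := by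
      apply Finset.prod_comm'
      intro x y
      simp
    rw [this]
    refine Finset.prod_congr rfl fun l _ => ?_
    rw [Finset.prod_const, Fin.card_Ioi]
  simp_rw [Finset.prod_mul_distrib]
  rw [h1, ← Finset.prod_mul_distrib]
  refine Finset.prod_congr rfl fun l _ => ?_
  rw [Finset.prod_const, Fin.card_Iio, ← pow_add]
  congr 1
  omega

theorem prod_pair_le {n : ℕ} (f : Fin n → Fin n → ℝ) (b : Fin n → ℝ)
    (h0 : ∀ k l, 0 ≤ f k l) (h : ∀ k l, f k l ≤ b k * b l) :
    ∏ k, ∏ l ∈ Finset.Iio k, f k l ≤ ∏ k, b k ^ (n - 1) := by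
  rw [← prod_pair_eq]
  refine Finset.prod_le_prod (fun k _ => Finset.prod_nonneg fun l _ => h0 k l) fun k _ => ?_
  exact Finset.prod_le_prod (fun l _ => h0 k l) fun l _ => h k l

theorem integrable_base {r : ℝ} (hr : 1 < r) :
    Integrable (fun x : ℝ => (1 + x ^ 2) ^ (-r / 2)) := by
  have := integrable_rpow_neg_one_add_norm_sq (E := ℝ) (μ := volume) (r := r) (by simpa using hr)
  simpa using this

theorem coe_nonneg (n : ℕ) (a : ℝ) (x : Fin n → ℝ) : 0 ≤ coeTotalIntegrand n a x := by
  unfold coeTotalIntegrand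
  refine mul_nonneg (Finset.prod_nonneg fun i _ => by positivity) ?_
  exact Finset.prod_nonneg fun i _ => Finset.prod_nonneg fun j _ => abs_nonneg _

theorem coe_continuous (n : ℕ) (a : ℝ) : Continuous (coeTotalIntegrand n a) := by
  unfold coeTotalIntegrand
  refine Continuous.mul (continuous_finsetProd _ fun i _ => ?_) ?_
  · refine Continuous.rpow_const (by fun_prop) fun x => Or.inl (by positivity)
  · exact continuous_finsetProd _ fun i _ => continuous_finsetProd _ fun j _ => by fun_prop

theorem coe_integrable (n : ℕ) (hn : 1 ≤ n) (a : ℝ) (ha : -1 < a) :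
    Integrable (coeTotalIntegrand n a) := by
  have hb : Integrable (fun x : Fin n → ℝ => ∏ i, (1 + (x i) ^ 2) ^ (-(a + 2) / 2)) :=
    Integrable.fintype_prod (μ := fun _ => volume) fun _ => integrable_base (by linarith)
  refine hb.mono' (coe_continuous n a).aestronglyMeasurable (Filter.Eventually.of_forall fun x => ?_)
  rw [Real.norm_of_nonneg (coe_nonneg n a x)]
  unfold coeTotalIntegrand
  have h1 := prod_pair_le (fun k l => |x k - x l|) (fun k => (1 + (x k) ^ 2) ^ (1 / 2 : ℝ))
    (fun k l => abs_nonneg _) (fun k l => by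
      rw [← Real.mul_rpow (by positivity) (by positivity), ← Real.sqrt_eq_rpow]
      apply Real.le_sqrt_of_sq_le
      rw [sq_abs]
      nlinarith [sq_nonneg (1 + x k * x l)])
  calc _ ≤ (∏ i, (1 + (x i) ^ 2) ^ (-(((n : ℝ) + a + 1) / 2))) *
        ∏ k, ((1 + (x k) ^ 2) ^ (1 / 2 : ℝ)) ^ (n - 1) :=
        mul_le_mul_of_nonneg_left h1 (Finset.prod_nonneg fun i _ => by positivity)
    _ = _ := by
        rw [← Finset.prod_mul_distrib]
        refine Finset.prod_congr rfl fun i _ => ?_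
        have hu : 0 < 1 + x i ^ 2 := by positivity
        generalize 1 + x i ^ 2 = u at hu
        rw [← Real.rpow_natCast, ← Real.rpow_mul (by positivity), ← Real.rpow_add (by positivity)]
        congr 1
        rw [Nat.cast_sub hn]
        push_cast
        ring

theorem coe_pos (n : ℕ) (hn : 1 ≤ n) (a : ℝ) (ha : -1 < a) :
    0 < ∫ x, coeTotalIntegrand n a x := by
  refine integral_pos_of_integrable_nonneg_nonzero (x := fun i : Fin n => ((i : ℕ) : ℝ))
    (coe_continuous n a) (coe_integrable n hn a ha) (coe_nonneg n a) ?_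
  unfold coeTotalIntegrand
  refine mul_ne_zero (Finset.prod_ne_zero_iff.2 fun i _ => by positivity) ?_
  refine Finset.prod_ne_zero_iff.2 fun i _ => Finset.prod_ne_zero_iff.2 fun j hj => ?_
  rw [abs_ne_zero, sub_ne_zero]
  have : j < i := Finset.mem_Iio.1 hj
  intro h
  have := Nat.cast_injective h
  omega

/-- integrand of the unitary ensemble after substituting `y = t^2` -/
noncomputable def cueSq (m μ n : ℕ) (a : ℝ) (t : Fin m → ℝ) : ℝ :=
  (∏ i, (t i) ^ (2 * μ) * (1 + (t i) ^ 2) ^ (-((n : ℝ) + a))) *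
    ∏ i, ∏ l ∈ Finset.Iio i, ((t i) ^ 2 - (t l) ^ 2) ^ 2

theorem cueSq_continuous (m μ n : ℕ) (a : ℝ) : Continuous (cueSq m μ n a) := by
  unfold cueSq
  refine Continuous.mul (continuous_finsetProd _ fun i _ => ?_) ?_
  · refine Continuous.mul (by fun_prop) ?_
    refine Continuous.rpow_const (by fun_prop) fun x => Or.inl (by positivity)
  · exact continuous_finsetProd _ fun i _ => continuous_finsetProd _ fun j _ => by fun_prop

theorem cueSq_nonneg (m μ n : ℕ) (a : ℝ) (t : Fin m → ℝ) : 0 ≤ cueSq m μ n a t := by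
  unfold cueSq
  refine mul_nonneg (Finset.prod_nonneg fun i _ => ?_) ?_
  · refine mul_nonneg ?_ (by positivity)
    rw [pow_mul]; positivity
  · exact Finset.prod_nonneg fun i _ => Finset.prod_nonneg fun j _ => sq_nonneg _

theorem cueSq_integrable (m μ n : ℕ) (hm : 1 ≤ m) (hn : n = 2 * m + μ) (a : ℝ) (ha : -1 < a) :
    Integrable (cueSq m μ n a) := by
  have hb : Integrable (fun x : Fin m → ℝ => ∏ i, (1 + (x i) ^ 2) ^ (-(2 * a + 4) / 2)) :=
    Integrable.fintype_prod (μ := fun _ => volume) fun _ => integrable_base (by linarith)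
  refine hb.mono' (cueSq_continuous m μ n a).aestronglyMeasurable (Filter.Eventually.of_forall fun x => ?_)
  rw [Real.norm_of_nonneg (cueSq_nonneg m μ n a x)]
  unfold cueSq
  have h1 := prod_pair_le (fun k l => ((x k) ^ 2 - (x l) ^ 2) ^ 2) (fun k => (1 + (x k) ^ 2) ^ 2)
    (fun k l => sq_nonneg _) (fun k l => by
      rw [← mul_pow]
      apply sq_le_sq'
      · nlinarith [sq_nonneg (x k), sq_nonneg (x l), mul_nonneg (sq_nonneg (x k)) (sq_nonneg (x l))]
      · nlinarith [sq_nonneg (x k), sq_nonneg (x l), mul_nonneg (sq_nonneg (x k)) (sq_nonneg (x l))])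
  have h2 : (∏ i, (x i) ^ (2 * μ) * (1 + (x i) ^ 2) ^ (-((n : ℝ) + a)))
      ≤ ∏ i, (1 + (x i) ^ 2) ^ μ * (1 + (x i) ^ 2) ^ (-((n : ℝ) + a)) := by
    refine Finset.prod_le_prod (fun i _ => ?_) (fun i _ => ?_)
    · refine mul_nonneg ?_ (by positivity)
      rw [pow_mul]; positivity
    · refine mul_le_mul_of_nonneg_right ?_ (by positivity)
      rw [pow_mul]
      exact pow_le_pow_left₀ (sq_nonneg _) (by linarith) _
  calc _ ≤ (∏ i, (1 + (x i) ^ 2) ^ μ * (1 + (x i) ^ 2) ^ (-((n : ℝ) + a))) *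
        ∏ k, ((1 + (x k) ^ 2) ^ 2) ^ (m - 1) :=
        mul_le_mul h2 h1
          (Finset.prod_nonneg fun i _ => Finset.prod_nonneg fun j _ => sq_nonneg _)
          (Finset.prod_nonneg fun i _ => by positivity)
    _ = _ := by
        rw [← Finset.prod_mul_distrib]
        refine Finset.prod_congr rfl fun i _ => ?_
        have hu : 0 < 1 + x i ^ 2 := by positivity
        generalize 1 + x i ^ 2 = u at hu
        rw [← pow_mul, ← Real.rpow_natCast, ← Real.rpow_natCast, ← Real.rpow_add (by positivity),
          ← Real.rpow_add (by positivity)]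
        congr 1
        rw [hn]
        push_cast [Nat.cast_sub hm]
        ring

theorem cue_cov (m μ n : ℕ) (a : ℝ) (g : (Fin m → ℝ) → ℝ) :
    (IntegrableOn (fun y => g y * cueTotalIntegrand m μ n a y) {y : Fin m → ℝ | ∀ i, 0 < y i} ↔
      Integrable (fun t => g (fun i => t i ^ 2) * cueSq m μ n a t) (piM m)) ∧
    ∫ y in {y : Fin m → ℝ | ∀ i, 0 < y i}, g y * cueTotalIntegrand m μ n a y
      = 2 ^ m * ∫ t, g (fun i => t i ^ 2) * cueSq m μ n a t ∂(piM m) := by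
  set S : Set (Fin m → ℝ) := {y : Fin m → ℝ | ∀ i, 0 < y i} with hS
  have hSm : MeasurableSet S := by
    have : S = ⋂ i, {y | 0 < y i} := by ext; simp [hS]
    rw [this]
    exact MeasurableSet.iInter fun i => measurableSet_lt measurable_const (measurable_pi_apply i)
  let f : (Fin m → ℝ) → (Fin m → ℝ) := fun t i => t i ^ 2
  let f' : (Fin m → ℝ) → ((Fin m → ℝ) →L[ℝ] (Fin m → ℝ)) := fun t =>
    ContinuousLinearMap.pi fun i => (2 * t i) • ContinuousLinearMap.proj (R := ℝ) (φ := fun _ : Fin m => ℝ) i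
  have hf : ∀ t ∈ S, HasFDerivWithinAt f (f' t) S t := by
    intro t _
    apply HasFDerivAt.hasFDerivWithinAt
    rw [hasFDerivAt_pi]
    intro i
    have := (hasFDerivAt_apply (𝕜 := ℝ) (F' := fun _ : Fin m => ℝ) i t).pow 2
    simpa using this
  have hinj : Set.InjOn f S := by
    intro t ht u hu h
    funext i
    have := congrFun h i
    exact (pow_left_inj₀ (ht i).le (hu i).le two_ne_zero).1 this
  have himg : f '' S = S := by
    ext y
    constructor
    · rintro ⟨t, ht, rfl⟩ i
      exact pow_pos (ht i) 2
    · intro hy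
      refine ⟨fun i => Real.sqrt (y i), fun i => Real.sqrt_pos.2 (hy i), ?_⟩
      funext i
      exact Real.sq_sqrt (hy i).le
  have hdet : ∀ t, (f' t).det = ∏ i, (2 * t i) := by
    intro t
    have : ((f' t : (Fin m → ℝ) →L[ℝ] (Fin m → ℝ)) : (Fin m → ℝ) →ₗ[ℝ] (Fin m → ℝ))
        = Matrix.toLin' (Matrix.diagonal fun i => 2 * t i) := by
      apply LinearMap.ext
      intro v
      funext i
      simp [f', Matrix.mulVec_diagonal]
    rw [ContinuousLinearMap.det, this, LinearMap.det_toLin', Matrix.det_diagonal]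
  have key : ∀ t ∈ S, |(f' t).det| • (g (f t) * cueTotalIntegrand m μ n a (f t))
      = 2 ^ m * (g (fun i => t i ^ 2) * cueSq m μ n a t) := by
    intro t ht
    rw [hdet, abs_of_pos (Finset.prod_pos fun i _ => mul_pos two_pos (ht i)),
      Finset.prod_mul_distrib]
    simp only [Finset.prod_const, Finset.card_univ, Fintype.card_fin, smul_eq_mul]
    have : (∏ i, t i) * cueTotalIntegrand m μ n a (f t) = cueSq m μ n a t := by
      unfold cueTotalIntegrand cueSq
      rw [← mul_assoc, ← Finset.prod_mul_distrib]
      congr 1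
      refine Finset.prod_congr rfl fun i _ => ?_
      simp only [f]
      rw [← mul_assoc]
      congr 1
      have hti := ht i
      rw [← Real.rpow_natCast (t i) 2, ← Real.rpow_mul hti.le]
      nth_rw 1 [← Real.rpow_one (t i)]
      rw [← Real.rpow_add hti, ← Real.rpow_natCast]
      congr 1
      push_cast
      ring
    rw [← this]
    simp only [f]
    ring
  constructor
  · rw [← himg, integrableOn_image_iff_integrableOn_abs_det_fderiv_smul volume hSm hf hinj,
      integrableOn_congr_fun key hSm, IntegrableOn, ← piM_eq]
    exact integrable_const_mul_iff (IsUnit.mk0 _ (by positivity)) _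
  · rw [← himg, integral_image_eq_integral_abs_det_fderiv_smul volume hSm hf hinj,
      setIntegral_congr_fun hSm key, ← piM_eq, integral_const_mul]

noncomputable def gfun (n : ℕ) (a : ℝ) (e : ℕ) (x : ℝ) : ℝ :=
  x ^ e * (1 + x ^ 2) ^ (-(((n : ℝ) + a + 1) / 2))

theorem gfun_continuous (n : ℕ) (a : ℝ) (e : ℕ) : Continuous (gfun n a e) := by
  unfold gfun
  refine Continuous.mul (by fun_prop) ?_
  exact Continuous.rpow_const (by fun_prop) fun x => Or.inl (by positivity)

theorem abs_pow_le_rpow (e : ℕ) (x : ℝ) : |x ^ e| ≤ (1 + x ^ 2) ^ ((e : ℝ) / 2) := by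
  have h : |x| ≤ (1 + x ^ 2) ^ (1 / 2 : ℝ) := by
    rw [← Real.sqrt_eq_rpow]
    apply Real.le_sqrt_of_sq_le
    rw [sq_abs]; linarith
  have hu : 0 < 1 + x ^ 2 := by positivity
  rw [abs_pow]
  refine (pow_le_pow_left₀ (abs_nonneg x) h e).trans (le_of_eq ?_)
  generalize 1 + x ^ 2 = u at hu
  rw [← Real.rpow_natCast, ← Real.rpow_mul hu.le]
  congr 1; ring

theorem gfun_integrable (n : ℕ) (a : ℝ) (ha : -1 < a) (e : ℕ) (he : e + 1 ≤ n) :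
    Integrable (gfun n a e) := by
  refine (integrable_base (r := (n + a + 1) - e) ?_).mono' (gfun_continuous n a e).aestronglyMeasurable
    (Filter.Eventually.of_forall fun x => ?_)
  · have : (e : ℝ) + 1 ≤ n := by exact_mod_cast he
    linarith
  · have hu : 0 < 1 + x ^ 2 := by positivity
    have h := abs_pow_le_rpow e x
    rw [gfun, norm_mul, Real.norm_eq_abs, Real.norm_of_nonneg (by positivity)]
    refine (mul_le_mul_of_nonneg_right h (by positivity)).trans (le_of_eq ?_)
    generalize 1 + x ^ 2 = u at hu
    rw [← Real.rpow_add hu]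
    congr 1; ring

noncomputable def Tfun (n : ℕ) (a : ℝ) (e : ℕ) (t : ℝ) : ℝ := ∫ x in Set.Ioi t, gfun n a e x

theorem hasDeriv_aux (n : ℕ) (a : ℝ) (e : ℕ) (x : ℝ) :
    HasDerivAt (fun x : ℝ => x ^ e * (1 + x ^ 2) ^ (-(((n : ℝ) + a - 1) / 2)))
      (e * gfun n a (e - 1) x + (e - ((n : ℝ) + a - 1)) * gfun n a (e + 1) x) x := by
  have hu : 0 < 1 + x ^ 2 := by positivity
  have h1 : HasDerivAt (fun x : ℝ => 1 + x ^ 2) (2 * x) x := by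
    simpa using (hasDerivAt_pow 2 x).const_add 1
  have h2 := h1.rpow_const (p := -(((n : ℝ) + a - 1) / 2)) (Or.inl hu.ne')
  have h3 := (hasDerivAt_pow e x).mul h2
  convert! h3 using 1
  unfold gfun
  have e1 : (1 + x ^ 2) ^ (-(((n : ℝ) + a - 1) / 2)) =
      (1 + x ^ 2) * (1 + x ^ 2) ^ (-(((n : ℝ) + a + 1) / 2)) := by
    nth_rw 2 [← Real.rpow_one (1 + x ^ 2)]
    rw [← Real.rpow_add hu]; congr 1; ring
  have e2 : (-(((n : ℝ) + a - 1) / 2) - 1) = (-(((n : ℝ) + a + 1) / 2)) := by ring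
  rw [e1, e2]
  rcases Nat.eq_zero_or_pos e with rfl | he
  · simp; ring
  · obtain ⟨k, rfl⟩ : ∃ k, e = k + 1 := ⟨e - 1, by omega⟩
    simp only [Nat.add_sub_cancel]
    push_cast
    ring

theorem tendsto_aux (n : ℕ) (a : ℝ) (ha : -1 < a) (e : ℕ) (he : e + 2 ≤ n) :
    Filter.Tendsto (fun x : ℝ => x ^ e * (1 + x ^ 2) ^ (-(((n : ℝ) + a - 1) / 2)))
      Filter.atTop (nhds 0) := by
  have he' : (e : ℝ) + 2 ≤ n := by exact_mod_cast he
  have h1 : Filter.Tendsto (fun x : ℝ => 1 + x ^ 2) Filter.atTop Filter.atTop :=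
    Filter.tendsto_atTop_add_const_left _ _ (Filter.tendsto_pow_atTop two_ne_zero)
  have h2 := (tendsto_rpow_neg_atTop (y := ((n : ℝ) + a - 1) / 2 - e / 2) (by linarith)).comp h1
  refine squeeze_zero_norm (fun x => ?_) h2
  have hu : 0 < 1 + x ^ 2 := by positivity
  have h := abs_pow_le_rpow e x
  rw [norm_mul, Real.norm_eq_abs, Real.norm_of_nonneg (by positivity)]
  refine (mul_le_mul_of_nonneg_right h (by positivity)).trans (le_of_eq ?_)
  simp only [Function.comp]
  generalize 1 + x ^ 2 = u at hu
  rw [← Real.rpow_add hu]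
  congr 1; ring

theorem T_rec (n : ℕ) (a : ℝ) (ha : -1 < a) (e : ℕ) (he : e + 2 ≤ n) (t : ℝ) :
    (e : ℝ) * Tfun n a (e - 1) t + (e - ((n : ℝ) + a - 1)) * Tfun n a (e + 1) t =
      - (t ^ e * (1 + t ^ 2) ^ (-(((n : ℝ) + a - 1) / 2))) := by
  have i1 := (gfun_integrable n a ha (e - 1) (by omega)).integrableOn (s := Set.Ioi t)
  have i2 := (gfun_integrable n a ha (e + 1) (by omega)).integrableOn (s := Set.Ioi t)
  have := integral_Ioi_of_hasDerivAt_of_tendsto' (a := t) (fun x _ => hasDeriv_aux n a e x)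
    ((i1.const_mul (e : ℝ)).add (i2.const_mul ((e : ℝ) - ((n : ℝ) + a - 1))))
    (tendsto_aux n a ha e he)
  rw [integral_add (i1.const_mul _) (i2.const_mul _), integral_const_mul, integral_const_mul] at this
  unfold Tfun
  rw [this]; ring

theorem T_form (m μ n : ℕ) (hμ : μ ≤ 1) (hn : n = 2 * m + μ) (a : ℝ) (ha : -1 < a) (j : ℕ)
    (hj : j < m + μ) :
    ∃ (α : ℝ) (c : Fin m → ℝ), ∀ t : ℝ, Tfun n a (2 * j + 1 - μ) t =
      (μ : ℝ) * α * Tfun n a 0 t +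
        t ^ μ * (1 + t ^ 2) ^ (-(((n : ℝ) + a - 1) / 2)) * ∑ q : Fin m, (t ^ 2) ^ (q : ℕ) * c q := by
  have hnr : (n : ℝ) = 2 * m + μ := by rw [hn]; push_cast; ring
  induction j with
  | zero =>
    rcases Nat.le_one_iff_eq_zero_or_eq_one.1 hμ with rfl | rfl
    · have hne : ((0 : ℕ) : ℝ) - ((n : ℝ) + a - 1) ≠ 0 := by
        have : (1 : ℝ) ≤ m := by exact_mod_cast (by omega : 1 ≤ m)
        have : ((0 : ℕ) : ℝ) - ((n : ℝ) + a - 1) < 0 := by rw [hnr]; push_cast; linarith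
        exact this.ne
      refine ⟨0, Pi.single ⟨0, by omega⟩ (-(((0 : ℕ) : ℝ) - ((n : ℝ) + a - 1))⁻¹), fun t => ?_⟩
      have h := T_rec n a ha 0 (by omega) t
      simp only [Pi.single_apply, mul_ite, mul_zero, Finset.sum_ite_eq', Finset.mem_univ, if_true]
      simp only [Nat.cast_zero, zero_mul, zero_add, pow_zero, one_mul, Nat.sub_zero] at h hne ⊢
      field_simp
      linear_combination h
    · refine ⟨1, 0, fun t => ?_⟩
      simp
  | succ j ih =>
    obtain ⟨α, c, h⟩ := ih (by omega)
    set e : ℕ := 2 * j + 2 - μ with he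
    have her : (e : ℝ) = 2 * j + 2 - μ := by
      rw [he, Nat.cast_sub (by omega)]; push_cast; ring
    have hne : (e : ℝ) - ((n : ℝ) + a - 1) ≠ 0 := by
      have : (j : ℝ) + 1 + 1 ≤ m + μ := by exact_mod_cast (by omega : j + 1 + 1 ≤ m + μ)
      have : (e : ℝ) - ((n : ℝ) + a - 1) < 0 := by rw [hnr, her]; linarith
      exact this.ne
    set d : ℝ := (e : ℝ) - ((n : ℝ) + a - 1) with hd
    refine ⟨- (e / d) * α, (-(e / d)) • c + Pi.single ⟨j + 1 - μ, by omega⟩ (-d⁻¹), fun t => ?_⟩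
    have h' := T_rec n a ha e (by omega) t
    have e1 : e - 1 = 2 * j + 1 - μ := by omega
    have e2 : e + 1 = 2 * (j + 1) + 1 - μ := by omega
    rw [e1, e2, h t, ← hd] at h'
    have e3 : t ^ e = t ^ μ * (t ^ 2) ^ (j + 1 - μ) := by
      rw [← pow_mul, ← pow_add]; congr 1; omega
    rw [e3] at h'
    generalize Tfun n a (2 * (j + 1) + 1 - μ) t = X at h' ⊢
    simp only [Pi.add_apply, Pi.smul_apply, smul_eq_mul, mul_add, Finset.sum_add_distrib]
    simp only [Pi.single_apply, mul_ite, mul_zero, Finset.sum_ite_eq', Finset.mem_univ, if_true]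
    have e4 : ∑ q : Fin m, (t ^ 2) ^ (q : ℕ) * (-(e / d) * c q) = -(e / d) * ∑ q : Fin m, (t ^ 2) ^ (q : ℕ) * c q := by
      rw [Finset.mul_sum]
      exact Finset.sum_congr rfl fun q _ => by ring
    rw [e4]
    apply mul_left_cancel₀ hne
    rw [eq_sub_of_add_eq' h']
    field_simp
    ring

/-- lower endpoints of the intervals containing the eliminated variables -/
noncomputable def Lfun (m μ : ℕ) (y : Fin m → ℝ) (i : Fin (m + μ)) : ℝ :=
  if h : μ ≤ (i : ℕ) then y ⟨i - μ, by omega⟩ else 0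

theorem det_T (m μ n : ℕ) (hμ : μ ≤ 1) (hn : n = 2 * m + μ) (a : ℝ) (ha : -1 < a) :
    ∃ C : ℝ, ∀ y : Fin m → ℝ,
      (Matrix.of fun i j : Fin (m + μ) => Tfun n a (2 * (j : ℕ) + 1 - μ) (Lfun m μ y i)).det =
      C * ((∏ i, y i ^ μ * (1 + y i ^ 2) ^ (-(((n : ℝ) + a - 1) / 2))) *
        ∏ k, ∏ l ∈ Finset.Iio k, (y k ^ 2 - y l ^ 2)) := by
  have hT := fun j : Fin (m + μ) => T_form m μ n hμ hn a ha j j.2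
  choose α c h using hT
  simp_rw [fun y : Fin m → ℝ => prod_Iio_eq_vandermonde (fun k => y k ^ 2), ← Matrix.det_mul_column]
  rcases Nat.le_one_iff_eq_zero_or_eq_one.1 hμ with rfl | rfl
  · refine ⟨(Matrix.of fun q j : Fin m => c j q).det, fun y => ?_⟩
    rw [mul_comm, ← Matrix.det_mul]
    congr 1
    ext i j
    have hL : Lfun m 0 y i = y i := by simp [Lfun]
    rw [Matrix.of_apply, hL, h j, Matrix.mul_apply]
    simp only [Nat.cast_zero, zero_mul, zero_add, Matrix.of_apply, Matrix.vandermonde_apply,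
      mul_assoc, Finset.mul_sum]
  · let R : Matrix (Fin (m + 1)) (Fin (m + 1)) ℝ := Matrix.of fun p j =>
      Fin.cases (α j) (fun q => c j q) p
    refine ⟨Tfun n a 0 0 * R.det, fun y => ?_⟩
    let N : Matrix (Fin (m + 1)) (Fin (m + 1)) ℝ := Matrix.of fun i p =>
      Fin.cases (Tfun n a 0 (Lfun m 1 y i)) (fun q : Fin m =>
        Lfun m 1 y i * (1 + Lfun m 1 y i ^ 2) ^ (-(((n : ℝ) + a - 1) / 2)) *
          (Lfun m 1 y i ^ 2) ^ (q : ℕ)) p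
    have hL0 : Lfun m 1 y 0 = 0 := by simp [Lfun]
    have hLs : ∀ i : Fin m, Lfun m 1 y i.succ = y i := by intro i; simp [Lfun]
    have hNR : (Matrix.of fun i j : Fin (m + 1) =>
        Tfun n a (2 * (j : ℕ) + 1 - 1) (Lfun m 1 y i)) = N * R := by
      ext i j
      rw [Matrix.of_apply, h j, Matrix.mul_apply, Fin.sum_univ_succ]
      simp only [N, R, Matrix.of_apply, Fin.cases_zero, Fin.cases_succ, Nat.cast_one, one_mul,
        pow_one, Finset.mul_sum, mul_assoc]
      ring
    have hN : N.det = Tfun n a 0 0 * (Matrix.of fun i j : Fin m =>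
        (y i ^ 1 * (1 + y i ^ 2) ^ (-(((n : ℝ) + a - 1) / 2))) *
          Matrix.vandermonde (fun k => y k ^ 2) i j).det := by
      rw [Matrix.det_succ_row_zero, Fin.sum_univ_succ]
      have hz : ∀ q : Fin m, N 0 q.succ = 0 := by
        intro q
        simp [N, hL0]
      simp only [hz, mul_zero, zero_mul, Finset.sum_const_zero, add_zero, Fin.val_zero, pow_zero,
        one_mul]
      have h00 : N 0 0 = Tfun n a 0 0 := by simp [N, hL0]
      rw [h00]
      congr 2
      ext i j
      simp [N, hLs, Matrix.vandermonde_apply, Fin.succAbove_zero]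
    rw [hNR, Matrix.det_mul, hN]
    ring

def Iset {N : ℕ} (L : Fin N → ℝ) (i : Fin N) : Set ℝ :=
  {z | L i < z ∧ ∀ h : (i : ℕ) + 1 < N, z < L ⟨i + 1, h⟩}

theorem det_eq_succ {N : ℕ} (A B : Matrix (Fin N) (Fin N) ℝ)
    (h1 : ∀ i j : Fin N, ∀ h : (i : ℕ) + 1 < N, A i j = B i j + A ⟨i + 1, h⟩ j)
    (h2 : ∀ i j : Fin N, ¬ ((i : ℕ) + 1 < N) → A i j = B i j) : A.det = B.det := by
  cases N with
  | zero => simp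
  | succ N =>
    rw [← Matrix.det_submatrix_equiv_self Fin.revPerm A, ← Matrix.det_submatrix_equiv_self Fin.revPerm B]
    refine Matrix.det_eq_of_forall_row_eq_smul_add_pred (fun _ => 1) (fun j => ?_) (fun i j => ?_)
    · simp only [Matrix.submatrix_apply, Fin.revPerm_apply]
      apply h2
      simp
    · simp only [Matrix.submatrix_apply, Fin.revPerm_apply, one_mul]
      have hlt : ((i.succ.rev : Fin (N + 1)) : ℕ) + 1 < N + 1 := by
        rw [Fin.val_rev, Fin.val_succ]
        have := i.isLt
        omega
      rw [h1 _ _ hlt]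
      congr 2
      ext
      simp [Fin.val_rev]; omega

theorem integral_det {N : ℕ} (S : Fin N → Set ℝ) (g : Fin N → ℝ → ℝ)
    (hg : ∀ j, Integrable (g j) rhoM) :
    ∫ z in Set.univ.pi S, (Matrix.of fun i j => g j (z i)).det ∂(piM N)
      = (Matrix.of fun i j => ∫ x in S i, g j x ∂rhoM).det := by
  have hr : (piM N).restrict (Set.univ.pi S) = Measure.pi fun i => rhoM.restrict (S i) := by
    unfold piM
    exact Measure.restrict_pi_pi _ _
  rw [hr]
  have hint : ∀ σ : Equiv.Perm (Fin N), Integrable (fun z : Fin N → ℝ => ∏ i, g (σ i) (z i))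
      (Measure.pi fun i => rhoM.restrict (S i)) := fun σ =>
    Integrable.fintype_prod (f := fun i => g (σ i)) fun i => (hg (σ i)).restrict
  have e1 : ∀ z : Fin N → ℝ, (Matrix.of fun i j => g j (z i)).det
      = ∑ σ : Equiv.Perm (Fin N), ((Equiv.Perm.sign σ : ℤ) : ℝ) * ∏ i, g (σ i) (z i) := by
    intro z
    rw [← Matrix.det_transpose, Matrix.det_apply']
    rfl
  simp_rw [e1]
  rw [integral_finsetSum _ fun σ _ => (hint σ).const_mul _, ← Matrix.det_transpose,
    Matrix.det_apply']
  refine Finset.sum_congr rfl fun σ _ => ?_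
  rw [integral_const_mul, integral_fintype_prod_eq_prod (fun i => g (σ i))]
  rfl

theorem rho_Ioi (g : ℝ → ℝ) (t : ℝ) (ht : 0 ≤ t) :
    ∫ x in Set.Ioi t, g x ∂rhoM = ∫ x in Set.Ioi t, g x := by
  unfold rhoM
  rw [Measure.restrict_restrict measurableSet_Ioi, Set.Ioi_inter_Ioi, sup_eq_left.2 ht]

theorem integral_det_T {N : ℕ} (L : Fin N → ℝ) (hL0 : ∀ i, 0 ≤ L i) (hL : Monotone L)
    (g : Fin N → ℝ → ℝ) (hg : ∀ j, Integrable (g j)) :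
    ∫ z in Set.univ.pi (Iset L), (Matrix.of fun i j => g j (z i)).det ∂(piM N)
      = (Matrix.of fun i j => ∫ x in Set.Ioi (L i), g j x).det := by
  have hg' : ∀ j, Integrable (g j) rhoM := fun j => (hg j).restrict
  rw [integral_det _ _ hg']
  symm
  refine det_eq_succ _ _ (fun i j h => ?_) (fun i j h => ?_)
  · simp only [Matrix.of_apply]
    have hle : L i ≤ L ⟨i + 1, h⟩ := hL (by rw [Fin.le_def]; simp)
    have hI : Iset L i = Set.Ioo (L i) (L ⟨i + 1, h⟩) := by
      ext z; simp [Iset, h]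
    have : NullSingletonClass rhoM := by unfold rhoM; infer_instance
    rw [hI, ← integral_Ioc_eq_integral_Ioo, ← rho_Ioi _ _ (hL0 _), ← rho_Ioi _ _ (hL0 _),
      ← setIntegral_union (Set.Ioc_disjoint_Ioi le_rfl) measurableSet_Ioi (hg' j).integrableOn
        (hg' j).integrableOn, Set.Ioc_union_Ioi_eq_Ioi hle]
  · simp only [Matrix.of_apply]
    have hI : Iset L i = Set.Ioi (L i) := by
      ext z; simp [Iset, h]
    rw [hI, rho_Ioi _ _ (hL0 _)]

/-- splitting the coordinates into the two interlacing families -/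
noncomputable def splitEquiv (m μ : ℕ) (hμ : μ ≤ 1) :
    (Fin (2 * m + μ) → ℝ) ≃ᵐ (Fin (m + μ) → ℝ) × (Fin m → ℝ) :=
  (MeasurableEquiv.piCongrLeft (fun _ => ℝ) (posEquiv m μ hμ)).symm.trans
    (MeasurableEquiv.sumPiEquivProdPi fun _ => ℝ)

theorem splitEquiv_apply (m μ : ℕ) (hμ : μ ≤ 1) (t : Fin (2 * m + μ) → ℝ) :
    splitEquiv m μ hμ t = (fun i => t (posEquiv m μ hμ (Sum.inl i)),
      fun i => t (posEquiv m μ hμ (Sum.inr i))) := rfl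

theorem splitEquiv_mp (m μ : ℕ) (hμ : μ ≤ 1) :
    MeasurePreserving (splitEquiv m μ hμ) (piM (2 * m + μ)) ((piM (m + μ)).prod (piM m)) := by
  have h1 := (measurePreserving_piCongrLeft (fun _ : Fin (2 * m + μ) => rhoM) (posEquiv m μ hμ)).symm
  have h2 := measurePreserving_sumPiEquivProdPi (X := fun _ => ℝ)
    (fun _ : Fin (m + μ) ⊕ Fin m => rhoM)
  exact h2.comp h1

def Sreg (m μ : ℕ) : Set ((Fin (m + μ) → ℝ) × (Fin m → ℝ)) :=
  {p | (StrictMono p.2 ∧ ∀ i, 0 < p.2 i) ∧ p.1 ∈ Set.univ.pi (Iset (Lfun m μ p.2))}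

theorem strictMono_iff_split (m μ : ℕ) (hμ : μ ≤ 1) (t : Fin (2 * m + μ) → ℝ)
    (hpos : ∀ i, 0 < t i) :
    StrictMono t ↔ splitEquiv m μ hμ t ∈ Sreg m μ := by
  rw [splitEquiv_apply]
  simp only [Sreg, Set.mem_ofPred_eq, Set.mem_univ_pi, Iset, Lfun]
  constructor
  · intro h
    refine ⟨⟨fun i j hij => h ?_, fun i => hpos _⟩, fun i => ⟨?_, fun hi => ?_⟩⟩
    · rw [Fin.lt_def, posEquiv_inr, posEquiv_inr]
      have : (i : ℕ) < j := hij
      omega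
    · split_ifs with h'
      · apply h
        rw [Fin.lt_def, posEquiv_inr, posEquiv_inl]
        simp only
        omega
      · exact hpos _
    · rw [dif_pos (by omega)]
      apply h
      rw [Fin.lt_def, posEquiv_inr, posEquiv_inl]
      simp only
      omega
  · rintro ⟨⟨-, -⟩, hz⟩
    have key : ∀ (k : ℕ) (hk : k + 1 < 2 * m + μ), t ⟨k, by omega⟩ < t ⟨k + 1, hk⟩ := by
      intro k hk
      by_cases hpar : k % 2 = μ
      · have hi : (k - μ) / 2 + μ < m + μ := by omega
        have := (hz ⟨(k - μ) / 2 + μ, hi⟩).1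
        rw [dif_pos (by simp)] at this
        convert this using 2
        · ext; rw [posEquiv_inr]; simp only; omega
        · ext; rw [posEquiv_inl]; simp only; omega
      · have hi : (k + μ) / 2 + 1 < m + μ ∨ (k + μ) / 2 + 1 = m + μ := by omega
        have hi' : (k + μ) / 2 + 1 < m + μ := by omega
        have := (hz ⟨(k + μ) / 2, by omega⟩).2 hi'
        rw [dif_pos (by simp only; omega)] at this
        convert this using 2
        · ext; rw [posEquiv_inl]; simp only; omega
        · ext; rw [posEquiv_inr]; simp only; omega
    have key2 : ∀ (d k : ℕ) (hk : k + d + 1 < 2 * m + μ), t ⟨k, by omega⟩ < t ⟨k + d + 1, hk⟩ := by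
      intro d
      induction d with
      | zero => intro k hk; exact key k hk
      | succ d ih =>
        intro k hk
        exact (ih k (by omega)).trans (key (k + d + 1) hk)
    intro i j hij
    have hij' : (i : ℕ) < j := hij
    have := key2 (j - i - 1) i (by omega)
    have hj : j = ⟨(i : ℕ) + (j - i - 1) + 1, by omega⟩ := Fin.ext (by simp only; omega)
    rw [hj]
    exact this

theorem Lfun_nonneg (m μ : ℕ) (y : Fin m → ℝ) (hy : ∀ i, 0 < y i) (i) : 0 ≤ Lfun m μ y i := by
  unfold Lfun
  split_ifs
  · exact (hy _).le
  · exact le_rfl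

theorem Lfun_mono (m μ : ℕ) (y : Fin m → ℝ) (hy : ∀ i, 0 < y i) (hm : StrictMono y) :
    Monotone (Lfun m μ y) := by
  intro i j hij
  have hij' : (i : ℕ) ≤ j := hij
  unfold Lfun
  split_ifs with h1 h2 h2
  · apply hm.monotone; rw [Fin.le_def]; simp only; omega
  · omega
  · exact (hy _).le
  · exact le_rfl

theorem ae_pos (N : ℕ) : ∀ᵐ t ∂(piM N), ∀ i, 0 < t i := by
  rw [piM_eq]
  refine ae_restrict_mem (s := {y : Fin N → ℝ | ∀ i, 0 < y i}) ?_
  have : {y : Fin N → ℝ | ∀ i, 0 < y i} = ⋂ i, {y | 0 < y i} := by ext; simp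
  rw [this]
  exact MeasurableSet.iInter fun i => measurableSet_lt measurable_const (measurable_pi_apply i)

/-- The integral over ordered configurations of a split integrand. -/
theorem integral_ordered (m μ : ℕ) (hμ : μ ≤ 1) (G : (Fin (2 * m + μ) → ℝ) → ℝ)
    (hG : Integrable G (piM (2 * m + μ)))
    (kz : (Fin (m + μ) → ℝ) → ℝ) (ky : (Fin m → ℝ) → ℝ) (I : (Fin m → ℝ) → ℝ)
    (hsplit : ∀ t, StrictMono t → (∀ i, 0 < t i) →
      G t = kz (fun i => t (posEquiv m μ hμ (Sum.inl i))) *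
        ky (fun i => t (posEquiv m μ hμ (Sum.inr i))))
    (hI : ∀ y, StrictMono y → (∀ i, 0 < y i) →
      ∫ z in Set.univ.pi (Iset (Lfun m μ y)), kz z ∂(piM (m + μ)) = I y) :
    ∫ t in {t | StrictMono t}, G t ∂(piM (2 * m + μ)) =
      ∫ y in {y | StrictMono y}, I y * ky y ∂(piM m) := by
  classical
  let K : (Fin (m + μ) → ℝ) × (Fin m → ℝ) → ℝ := (Sreg m μ).indicator fun p => kz p.1 * ky p.2
  have hae : ({t | StrictMono t}.indicator G) =ᵐ[piM (2 * m + μ)] K ∘ splitEquiv m μ hμ := by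
    filter_upwards [ae_pos (2 * m + μ)] with t ht
    simp only [Function.comp, K, Set.indicator_apply, ← strictMono_iff_split m μ hμ t ht,
      Set.mem_ofPred_eq]
    split_ifs with h
    · rw [hsplit t h ht]; rfl
    · rfl
  have hmp := splitEquiv_mp m μ hμ
  have hemb := (splitEquiv m μ hμ).measurableEmbedding
  have hK : Integrable K ((piM (m + μ)).prod (piM m)) := by
    rw [← hmp.integrable_comp_emb hemb, ← integrable_congr hae]
    exact hG.indicator (measurableSet_strictMono _)
  rw [← integral_indicator (measurableSet_strictMono _), integral_congr_ae hae]
  have e1 := hmp.integral_comp hemb K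
  simp only [Function.comp_def]
  rw [e1, integral_prod_symm _ hK, ← integral_indicator (measurableSet_strictMono _)]
  apply integral_congr_ae
  filter_upwards [ae_pos m] with y hy
  by_cases hs : StrictMono y
  · rw [Set.indicator_of_mem (by exact hs), ← hI y hs hy, ← integral_mul_const]
    have hms : MeasurableSet (Set.univ.pi (Iset (Lfun m μ y))) := by
      refine MeasurableSet.univ_pi fun i => ?_
      by_cases h : (i : ℕ) + 1 < m + μ
      · have hI : Iset (Lfun m μ y) i = Set.Ioo (Lfun m μ y i) (Lfun m μ y ⟨i + 1, h⟩) := by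
          ext z; simp [Iset, h]
        rw [hI]; exact measurableSet_Ioo
      · have hI : Iset (Lfun m μ y) i = Set.Ioi (Lfun m μ y i) := by
          ext z; simp [Iset, h]
        rw [hI]; exact measurableSet_Ioi
    rw [← integral_indicator hms]
    congr 1
    funext z
    simp only [K, Set.indicator_apply, Sreg, Set.mem_ofPred_eq]
    simp only [hs, hy, implies_true, true_and]
  · rw [Set.indicator_of_notMem (by exact hs)]
    have : ∀ z, K (z, y) = 0 := by
      intro z
      apply Set.indicator_of_notMem
      exact fun h => hs h.1.1
    simp [this]

theorem measurable_count {N : ℕ} (f : ℝ → ℝ) (hf : Measurable f) (c : ℝ) :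
    Measurable fun x : Fin N → ℝ => (Finset.univ.filter fun i => f (x i) < c).card := by
  simp_rw [Finset.card_filter]
  refine Finset.measurable_sum _ fun i _ => ?_
  exact Measurable.ite (measurableSet_lt (hf.comp (measurable_pi_apply i)) measurable_const)
    measurable_const measurable_const

theorem count_perm {N : ℕ} (p : ℝ → Prop) [DecidablePred p] (σ : Equiv.Perm (Fin N))
    (t : Fin N → ℝ) :
    (Finset.univ.filter fun i => p ((t ∘ σ) i)).card = (Finset.univ.filter fun i => p (t i)).card := by
  simp_rw [Finset.card_filter]
  exact Equiv.sum_comp σ fun i => if p (t i) then 1 else 0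

theorem abs_vand_perm {N : ℕ} (σ : Equiv.Perm (Fin N)) (t : Fin N → ℝ) :
    |(Matrix.vandermonde (t ∘ σ)).det| = |(Matrix.vandermonde t).det| := by
  have : Matrix.vandermonde (t ∘ σ) = (Matrix.vandermonde t).submatrix σ id := by
    ext i j; simp [Matrix.vandermonde_apply]
  rw [this, Matrix.det_permute, abs_mul]
  have : |(((Equiv.Perm.sign σ : ℤˣ) : ℤ) : ℝ)| = 1 := by
    rcases Int.units_eq_one_or (Equiv.Perm.sign σ) with h | h <;> simp [h]
  rw [this, one_mul]

theorem coeTotal_eq (n : ℕ) (a : ℝ) (x : Fin n → ℝ) :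
    coeTotalIntegrand n a x = (∏ i, (1 + (x i) ^ 2) ^ (-(((n : ℝ) + a + 1) / 2))) *
      |(Matrix.vandermonde x).det| := by
  rw [coeTotalIntegrand, ← prod_Iio_eq_vandermonde, Finset.abs_prod]
  simp_rw [Finset.abs_prod]

theorem coeTotal_perm (n : ℕ) (a : ℝ) (σ : Equiv.Perm (Fin n)) (x : Fin n → ℝ) :
    coeTotalIntegrand n a (x ∘ σ) = coeTotalIntegrand n a x := by
  rw [coeTotal_eq, coeTotal_eq, abs_vand_perm]
  congr 1
  exact Equiv.prod_comp σ fun i => (1 + (x i) ^ 2) ^ (-(((n : ℝ) + a + 1) / 2))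

theorem cueSq_eq (m μ n : ℕ) (a : ℝ) (t : Fin m → ℝ) :
    cueSq m μ n a t = (∏ i, (t i) ^ (2 * μ) * (1 + (t i) ^ 2) ^ (-((n : ℝ) + a))) *
      (Matrix.vandermonde fun i => t i ^ 2).det ^ 2 := by
  rw [cueSq, ← prod_Iio_eq_vandermonde]
  simp_rw [Finset.prod_pow]

theorem cueSq_perm (m μ n : ℕ) (a : ℝ) (σ : Equiv.Perm (Fin m)) (t : Fin m → ℝ) :
    cueSq m μ n a (t ∘ σ) = cueSq m μ n a t := by
  have h := abs_vand_perm σ fun i => t i ^ 2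
  rw [cueSq_eq, cueSq_eq, ← sq_abs, ← sq_abs (Matrix.vandermonde fun i => t i ^ 2).det, ← h]
  congr 1
  exact Equiv.prod_comp σ fun i => (t i) ^ (2 * μ) * (1 + (t i) ^ 2) ^ (-((n : ℝ) + a))

theorem unit_abs (u : ℤˣ) (x : ℝ) : |((u : ℤ) : ℝ) * x| = |x| := by
  rcases Int.units_eq_one_or u with h | h <;> simp [h]

theorem unit_sq (u : ℤˣ) (x : ℝ) : (((u : ℤ) : ℝ) * x) ^ 2 = x ^ 2 := by
  rw [← sq_abs, unit_abs, sq_abs]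

theorem integrable_bdd {α : Type*} [MeasurableSpace α] {ν : Measure α} (c f : α → ℝ)
    (hc : Measurable c) (h1 : ∀ x, |c x| ≤ 1) (hf : Integrable f ν) :
    Integrable (fun x => c x * f x) ν :=
  hf.bdd_mul (c := 1) hc.aestronglyMeasurable (Filter.Eventually.of_forall fun x => h1 x)

/-- the statistic of the orthogonal ensemble -/
noncomputable def Ffun (m μ : ℕ) (a : ℝ) (Φ : ℕ → ℝ) (s : ℝ) (x : Fin (2 * m + μ) → ℝ) : ℝ :=
  Φ (((Finset.univ.filter fun i => |x i| < s).card + 1 - μ) / 2) *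
    coeTotalIntegrand (2 * m + μ) a x

theorem Ffun_coef_meas (m μ : ℕ) (Φ : ℕ → ℝ) (s : ℝ) :
    Measurable fun x : Fin (2 * m + μ) → ℝ =>
      Φ (((Finset.univ.filter fun i => |x i| < s).card + 1 - μ) / 2) :=
  (Measurable.of_discrete (f := fun c : ℕ => Φ ((c + 1 - μ) / 2))).comp
    (measurable_count (fun x => |x|) (by fun_prop) s)

theorem Ffun_perm (m μ : ℕ) (a : ℝ) (Φ : ℕ → ℝ) (s : ℝ) (σ : Equiv.Perm (Fin (2 * m + μ)))
    (x : Fin (2 * m + μ) → ℝ) : Ffun m μ a Φ s (x ∘ σ) = Ffun m μ a Φ s x := by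
  rw [Ffun, Ffun, coeTotal_perm, count_perm (fun y => |y| < s)]

theorem Ffun_sum (m μ : ℕ) (a : ℝ) (Φ : ℕ → ℝ) (s : ℝ) (t : Fin (2 * m + μ) → ℝ) :
    ∑ ε : Fin (2 * m + μ) → ℤˣ, Ffun m μ a Φ s (fun i => ((ε i : ℤ) : ℝ) * t i) =
    Φ (((Finset.univ.filter fun i => |t i| < s).card + 1 - μ) / 2) *
      ((∏ i, (1 + (t i) ^ 2) ^ (-((((2 * m + μ : ℕ) : ℝ) + a + 1) / 2))) *
      ∑ ε : Fin (2 * m + μ) → ℤˣ,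
      ∏ k, ∏ l ∈ Finset.Iio k, |((ε k : ℤ) : ℝ) * t k - ((ε l : ℤ) : ℝ) * t l|) := by
  simp only [Ffun, coeTotalIntegrand, unit_abs, unit_sq, Finset.mul_sum]

theorem Ffun_sum_perm (m μ : ℕ) (a : ℝ) (Φ : ℕ → ℝ) (s : ℝ) (σ : Equiv.Perm (Fin (2 * m + μ)))
    (t : Fin (2 * m + μ) → ℝ) :
    ∑ ε : Fin (2 * m + μ) → ℤˣ, Ffun m μ a Φ s (fun i => ((ε i : ℤ) : ℝ) * (t ∘ σ) i) =
    ∑ ε : Fin (2 * m + μ) → ℤˣ, Ffun m μ a Φ s (fun i => ((ε i : ℤ) : ℝ) * t i) := by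
  rw [← Equiv.sum_comp (Equiv.arrowCongr σ.symm (Equiv.refl ℤˣ))]
  refine Finset.sum_congr rfl fun ε _ => ?_
  exact Ffun_perm m μ a Φ s σ fun i => ((ε i : ℤ) : ℝ) * t i

theorem Ffun_split (m μ : ℕ) (hμ : μ ≤ 1) (a : ℝ) (Φ : ℕ → ℝ) (s : ℝ) (hs : 0 < s)
    (t : Fin (2 * m + μ) → ℝ) (ht : StrictMono t) (hpos : ∀ i, 0 < t i)
    (z : Fin (m + μ) → ℝ) (hz : z = fun i => t (posEquiv m μ hμ (Sum.inl i)))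
    (y : Fin m → ℝ) (hy : y = fun i => t (posEquiv m μ hμ (Sum.inr i))) :
    ∑ ε : Fin (2 * m + μ) → ℤˣ, Ffun m μ a Φ s (fun i => ((ε i : ℤ) : ℝ) * t i) =
    (Matrix.of fun i j : Fin (m + μ) => gfun (2 * m + μ) a (2 * (j : ℕ) + 1 - μ) (z i)).det *
    (2 ^ (2 * m + μ) * Φ (Finset.univ.filter fun i => y i ^ 2 < s ^ 2).card *
      ((∏ i, y i ^ μ * (1 + y i ^ 2) ^ (-((((2 * m + μ : ℕ) : ℝ) + a + 1) / 2))) *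
        ∏ k, ∏ l ∈ Finset.Iio k, (y k ^ 2 - y l ^ 2))) := by
  have hg : (Matrix.of fun i j : Fin (m + μ) => gfun (2 * m + μ) a (2 * (j : ℕ) + 1 - μ) (z i)).det
      = (∏ i, (1 + z i ^ 2) ^ (-((((2 * m + μ : ℕ) : ℝ) + a + 1) / 2))) *
        (Matrix.of fun i j : Fin (m + μ) => z i ^ (2 * (j : ℕ) + 1 - μ)).det := by
    rw [← Matrix.det_mul_column]
    congr 1
    ext i j
    simp [gfun, mul_comm]
  have hc : (Finset.univ.filter fun i => |t i| < s).card = (Finset.univ.filter fun i => t i < s).card := by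
    simp_rw [fun i => abs_of_pos (hpos i)]
  have hc2 : (Finset.univ.filter fun i => y i ^ 2 < s ^ 2).card =
      (Finset.univ.filter fun i : Fin m => t (posEquiv m μ hμ (Sum.inr i)) < s).card := by
    subst hy
    simp_rw [fun i => pow_lt_pow_iff_left₀ (hpos i).le hs.le two_ne_zero]
  rw [Ffun_sum, hg, hc, count_lemma m μ hμ t ht s, ← hc2, coe_sign_sum t hpos ht, checker_det m μ hμ t,
    ← Equiv.prod_comp (posEquiv m μ hμ), Fintype.prod_sum_type, Finset.prod_mul_distrib]
  subst hz hy
  ring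

theorem Hfun_int (m μ : ℕ) (hm : 1 ≤ m) (a : ℝ) (ha : -1 < a) (Φ : ℕ → ℝ)
    (hΦ : ∀ c, |Φ c| ≤ 1) (s : ℝ) :
    Integrable (fun y : Fin m → ℝ => Φ (Finset.univ.filter fun i => y i ^ 2 < s ^ 2).card *
      cueSq m μ (2 * m + μ) a y) (piM m) := by
  refine integrable_bdd (fun y : Fin m → ℝ => Φ (Finset.univ.filter fun i => y i ^ 2 < s ^ 2).card) _
    ?_ (fun x => hΦ _) ?_
  · exact (Measurable.of_discrete (f := Φ)).comp
      (measurable_count (fun x => x ^ 2) (by fun_prop) (s ^ 2))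
  · rw [piM_eq]
    exact (cueSq_integrable m μ _ hm rfl a ha).restrict

theorem main_identity (m μ : ℕ) (hμ : μ ≤ 1) (hm : 1 ≤ m) (a : ℝ) (ha : -1 < a) :
    ∃ C : ℝ, ∀ (Φ : ℕ → ℝ), (∀ c, |Φ c| ≤ 1) → ∀ s : ℝ, 0 < s →
      ∫ x, Ffun m μ a Φ s x = C * ∫ y in {y : Fin m → ℝ | ∀ i, 0 < y i},
        Φ (Finset.univ.filter fun i => y i < s ^ 2).card * cueTotalIntegrand m μ (2 * m + μ) a y := by
  obtain ⟨C, hC⟩ := det_T m μ (2 * m + μ) hμ rfl a ha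
  refine ⟨((2 * m + μ).factorial : ℝ) * C * 2 ^ (2 * m + μ) / ((m.factorial : ℝ) * 2 ^ m),
    fun Φ hΦ s hs => ?_⟩
  have hFm : Measurable (Ffun m μ a Φ s) :=
    (Ffun_coef_meas m μ Φ s).mul (coe_continuous _ a).measurable
  have hFi : Integrable (Ffun m μ a Φ s) :=
    integrable_bdd _ _ (Ffun_coef_meas m μ Φ s) (fun x => hΦ _) (coe_integrable _ (by omega) a ha)
  obtain ⟨hGi, hG⟩ := integral_fold _ hFm hFi
  rw [hG, integral_symm _ hGi (Ffun_sum_perm m μ a Φ s)]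
  have hord := integral_ordered m μ hμ _ hGi
    (fun z => (Matrix.of fun i j : Fin (m + μ) =>
      gfun (2 * m + μ) a (2 * (j : ℕ) + 1 - μ) (z i)).det)
    (fun y => 2 ^ (2 * m + μ) * Φ (Finset.univ.filter fun i => y i ^ 2 < s ^ 2).card *
      ((∏ i, y i ^ μ * (1 + y i ^ 2) ^ (-((((2 * m + μ : ℕ) : ℝ) + a + 1) / 2))) *
        ∏ k, ∏ l ∈ Finset.Iio k, (y k ^ 2 - y l ^ 2)))
    (fun y => C * ((∏ i, y i ^ μ * (1 + y i ^ 2) ^ (-((((2 * m + μ : ℕ) : ℝ) + a - 1) / 2))) *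
        ∏ k, ∏ l ∈ Finset.Iio k, (y k ^ 2 - y l ^ 2)))
    (fun t ht hpos => Ffun_split m μ hμ a Φ s hs t ht hpos _ rfl _ rfl)
    (fun y hy hpos => by
      rw [← hC y]
      exact integral_det_T (Lfun m μ y) (Lfun_nonneg m μ y hpos) (Lfun_mono m μ y hpos hy)
        (fun j => gfun (2 * m + μ) a (2 * (j : ℕ) + 1 - μ))
        (fun j => gfun_integrable _ a ha _ (by omega)))
  rw [hord]
  have e : ∀ y : Fin m → ℝ,
      C * ((∏ i, y i ^ μ * (1 + y i ^ 2) ^ (-((((2 * m + μ : ℕ) : ℝ) + a - 1) / 2))) *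
        ∏ k, ∏ l ∈ Finset.Iio k, (y k ^ 2 - y l ^ 2)) *
      (2 ^ (2 * m + μ) * Φ (Finset.univ.filter fun i => y i ^ 2 < s ^ 2).card *
      ((∏ i, y i ^ μ * (1 + y i ^ 2) ^ (-((((2 * m + μ : ℕ) : ℝ) + a + 1) / 2))) *
        ∏ k, ∏ l ∈ Finset.Iio k, (y k ^ 2 - y l ^ 2))) =
      (C * 2 ^ (2 * m + μ)) * (Φ (Finset.univ.filter fun i => y i ^ 2 < s ^ 2).card *
        cueSq m μ (2 * m + μ) a y) := by
    intro y
    have h1 : (∏ i, (y i) ^ (2 * μ) * (1 + (y i) ^ 2) ^ (-(((2 * m + μ : ℕ) : ℝ) + a))) =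
        (∏ i, y i ^ μ * (1 + y i ^ 2) ^ (-((((2 * m + μ : ℕ) : ℝ) + a - 1) / 2))) *
        (∏ i, y i ^ μ * (1 + y i ^ 2) ^ (-((((2 * m + μ : ℕ) : ℝ) + a + 1) / 2))) := by
      rw [← Finset.prod_mul_distrib]
      refine Finset.prod_congr rfl fun i _ => ?_
      have hu : 0 < 1 + y i ^ 2 := by positivity
      have h2 : (1 + (y i) ^ 2) ^ (-(((2 * m + μ : ℕ) : ℝ) + a)) =
          (1 + y i ^ 2) ^ (-((((2 * m + μ : ℕ) : ℝ) + a - 1) / 2)) *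
          (1 + y i ^ 2) ^ (-((((2 * m + μ : ℕ) : ℝ) + a + 1) / 2)) := by
        rw [← Real.rpow_add hu]
        congr 1
        ring
      rw [h2, two_mul, pow_add]
      ring
    rw [cueSq_eq, h1, ← prod_Iio_eq_vandermonde]
    ring
  simp_rw [e]
  rw [integral_const_mul]
  have hsym := integral_symm _ (Hfun_int m μ hm a ha Φ hΦ s) (fun σ t => by
    rw [cueSq_perm]
    congr 2
    exact count_perm (fun y => y ^ 2 < s ^ 2) σ t)
  rw [(cue_cov m μ (2 * m + μ) a
    (fun y => Φ (Finset.univ.filter fun i => y i < s ^ 2).card)).2, hsym]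
  have hf : (m.factorial : ℝ) ≠ 0 := by exact_mod_cast m.factorial_ne_zero
  field_simp

theorem gap_split (m μ : ℕ) (hμ : μ ≤ 1) (a s : ℝ) (k : ℕ) (x : Fin (2 * m + μ) → ℝ) :
    coeGapIntegrand (2 * m + μ) a s (2 * (k : ℤ) + (μ : ℤ) - 1) x +
      coeGapIntegrand (2 * m + μ) a s (2 * (k : ℤ) + (μ : ℤ)) x =
    Ffun m μ a (fun c => if c = k then 1 else 0) s x := by
  simp only [coeGapIntegrand, Ffun, coeTotalIntegrand]
  generalize (Finset.univ.filter fun i => |x i| < s).card = c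
  split_ifs <;> first | (exfalso; omega) | simp

theorem coeGap_integrable (n : ℕ) (hn : 1 ≤ n) (a : ℝ) (ha : -1 < a) (s : ℝ) (j : ℤ) :
    Integrable (coeGapIntegrand n a s j) := by
  have h := integrable_bdd (ν := volume) (fun x : Fin n → ℝ =>
      if ((Finset.univ.filter fun i => |x i| < s).card : ℤ) = j then (1 : ℝ) else 0)
    (coeTotalIntegrand n a) ?_ ?_ (coe_integrable n hn a ha)
  · refine h.congr (Filter.Eventually.of_forall fun x => ?_)
    simp only [coeGapIntegrand, coeTotalIntegrand]
    split_ifs <;> simp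
  · exact (Measurable.of_discrete (f := fun c : ℕ => if (c : ℤ) = j then (1 : ℝ) else 0)).comp
      (measurable_count (fun x => |x|) (by fun_prop) s)
  · intro x
    split_ifs <;> simp

theorem cauchy_gap_probability (a : ℝ) (ha : -1 < a) (μ m n : ℕ) (hμ : μ = 0 ∨ μ = 1)
    (hm : 1 ≤ m) (hn : n = 2 * m + μ) (k : ℕ) (s : ℝ) (hs : 0 < s) :
    (∀ j : ℤ, Integrable (coeGapIntegrand n a s j)) ∧
    Integrable (coeTotalIntegrand n a) ∧
    IntegrableOn (cueGapIntegrand m μ n a (s ^ 2) k) {y : Fin m → ℝ | ∀ i, 0 < y i} ∧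
    IntegrableOn (cueTotalIntegrand m μ n a) {y : Fin m → ℝ | ∀ i, 0 < y i} ∧
    (0 < ∫ x, coeTotalIntegrand n a x) ∧
    (0 < ∫ y in {y : Fin m → ℝ | ∀ i, 0 < y i}, cueTotalIntegrand m μ n a y) ∧
    ((∫ x, coeGapIntegrand n a s (2 * (k : ℤ) + (μ : ℤ) - 1) x) +
        ∫ x, coeGapIntegrand n a s (2 * (k : ℤ) + (μ : ℤ)) x) /
      (∫ x, coeTotalIntegrand n a x) =
    (∫ y in {y : Fin m → ℝ | ∀ i, 0 < y i}, cueGapIntegrand m μ n a (s ^ 2) k y) /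
      (∫ y in {y : Fin m → ℝ | ∀ i, 0 < y i}, cueTotalIntegrand m μ n a y) := by
  have hμ' : μ ≤ 1 := by omega
  subst hn
  have hn1 : 1 ≤ 2 * m + μ := by omega
  have hb : ∀ c : ℕ, |(if c = k then (1 : ℝ) else 0)| ≤ 1 := by
    intro c; split_ifs <;> simp
  have hgapeq : cueGapIntegrand m μ (2 * m + μ) a (s ^ 2) k = fun y =>
      (fun c : ℕ => if c = k then (1 : ℝ) else 0) (Finset.univ.filter fun i => y i < s ^ 2).card *
        cueTotalIntegrand m μ (2 * m + μ) a y := by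
    funext y
    simp only [cueGapIntegrand, cueTotalIntegrand]
    split_ifs <;> simp
  have hint : ∀ Φ : ℕ → ℝ, (∀ c, |Φ c| ≤ 1) → IntegrableOn (fun y : Fin m → ℝ =>
      Φ (Finset.univ.filter fun i => y i < s ^ 2).card * cueTotalIntegrand m μ (2 * m + μ) a y)
      {y : Fin m → ℝ | ∀ i, 0 < y i} := fun Φ hΦ =>
    (cue_cov m μ (2 * m + μ) a
      (fun y => Φ (Finset.univ.filter fun i => y i < s ^ 2).card)).1.2 (Hfun_int m μ hm a ha Φ hΦ s)
  have hZ1 := coe_pos (2 * m + μ) hn1 a ha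
  obtain ⟨C, hC⟩ := main_identity m μ hμ' hm a ha
  have h1 := hC (fun _ => 1) (fun _ => by simp) s hs
  have h2 := hC (fun c => if c = k then (1 : ℝ) else 0) hb s hs
  have hi1 := hint (fun _ => 1) (fun _ => by simp)
  simp only [Ffun, one_mul] at h1 hi1
  have hmeas : MeasurableSet {y : Fin m → ℝ | ∀ i, 0 < y i} := by
    have : {y : Fin m → ℝ | ∀ i, 0 < y i} = ⋂ i, {y | 0 < y i} := by ext; simp
    rw [this]
    exact MeasurableSet.iInter fun i => measurableSet_lt measurable_const (measurable_pi_apply i)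
  have hZ2n : 0 ≤ ∫ y in {y : Fin m → ℝ | ∀ i, 0 < y i}, cueTotalIntegrand m μ (2 * m + μ) a y := by
    refine setIntegral_nonneg hmeas fun y hy => ?_
    have hy' : ∀ i, 0 < y i := hy
    refine mul_nonneg (Finset.prod_nonneg fun i _ => ?_)
      (Finset.prod_nonneg fun i _ => Finset.prod_nonneg fun l _ => sq_nonneg _)
    have := hy' i
    positivity
  have hZ2 : 0 < ∫ y in {y : Fin m → ℝ | ∀ i, 0 < y i}, cueTotalIntegrand m μ (2 * m + μ) a y := by
    refine lt_of_le_of_ne hZ2n fun h => ?_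
    rw [← h, mul_zero] at h1
    exact hZ1.ne' h1
  have hC0 : C ≠ 0 := by
    rintro rfl
    rw [zero_mul] at h1
    exact hZ1.ne' h1
  refine ⟨coeGap_integrable _ hn1 a ha s, coe_integrable _ hn1 a ha, ?_, hi1, hZ1, hZ2, ?_⟩
  · rw [hgapeq]
    exact hint _ hb
  · rw [← integral_add (coeGap_integrable _ hn1 a ha s _) (coeGap_integrable _ hn1 a ha s _)]
    simp_rw [gap_split m μ hμ' a s k]
    rw [h2, h1, hgapeq]
    exact mul_div_mul_left _ _ hC0
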